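/- Let f(x) = a·x² + b·x + c with a ≥ 1 and b, c ≥ 0. For every i with 1 ≤ i ≤ f(1) + 1, the maximum degree of the underlying graph of the q-Jaco graph J_i(f) equals i − 1, and the Jaconian set of J_i(f) is the whole vertex set {v_1, …, v_i}. -/

import Mathlib

/-- In-degree of vertex `v_j` in the (root) Jaco graph with incidence function `f`:
`d⁻(v_j) = |{ i : 1 ≤ i < j, i + f i − d⁻(v_i) ≥ j }|`. -/
noncomputable def jacoIn (f : ℕ → ℕ) (j : ℕ) : ℕ :=
  Nat.strongRecOn j (fun j ih =>
    (((Finset.Ico 1 j).attach).filter (fun i : {x // x ∈ Finset.Ico 1 j} =>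
      j ≤ i.1 + f i.1 - ih i.1 (Finset.mem_Ico.mp i.2).2)).card)

/-- The arc `(v_i, v_j)` is present in the Jaco graph iff `1 ≤ i < j` and
`i + f i − d⁻(v_i) ≥ j`. -/
def jacoArc (f : ℕ → ℕ) (i j : ℕ) : Prop :=
  1 ≤ i ∧ i < j ∧ j ≤ i + f i - jacoIn f i

noncomputable instance (f : ℕ → ℕ) (i j : ℕ) : Decidable (jacoArc f i j) := by
  unfold jacoArc; infer_instance

/-- The underlying undirected simple graph `J*_n(f)` of the finite Jaco graph `J_n(f)`,
on vertex set `{v_1, …, v_n}` (vertex `x : Fin n` represents `v_{x+1}`). -/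
def jacoGraph (f : ℕ → ℕ) (n : ℕ) : SimpleGraph (Fin n) :=
  SimpleGraph.fromRel (fun x y => jacoArc f (x.1 + 1) (y.1 + 1))

noncomputable instance (f : ℕ → ℕ) (n : ℕ) : DecidableRel (jacoGraph f n).Adj := fun x y =>
  decidable_of_iff
    (x ≠ y ∧ (jacoArc f (x.1 + 1) (y.1 + 1) ∨ jacoArc f (y.1 + 1) (x.1 + 1)))
    (by unfold jacoGraph; exact (SimpleGraph.fromRel_adj (fun a b : Fin n => jacoArc f (a.1 + 1) (b.1 + 1)) x y).symm)

theorem jacoIn_le (f : ℕ → ℕ) (j : ℕ) : jacoIn f j ≤ j - 1 := by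
  unfold jacoIn
  rw [Nat.strongRecOn_eq]
  refine (Finset.card_filter_le _ _).trans ?_
  simp

theorem jacoGraph_eq_top (f : ℕ → ℕ) (n : ℕ) (hf : ∀ x, 1 ≤ x → n ≤ f x + 1) :
    jacoGraph f n = ⊤ := by
  have key : ∀ x y : Fin n, x.1 < y.1 → jacoArc f (x.1 + 1) (y.1 + 1) := by
    intro x y hxy
    have h1 := jacoIn_le f (x.1 + 1)
    have h2 := hf (x.1 + 1) (by omega)
    have h3 := y.2
    refine ⟨by omega, by omega, by omega⟩
  ext x y
  unfold jacoGraph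
  rw [SimpleGraph.fromRel_adj, SimpleGraph.top_adj]
  constructor
  · exact fun h => h.1
  · intro h
    refine ⟨h, ?_⟩
    rcases lt_or_gt_of_ne (fun e => h (Fin.ext e) : x.1 ≠ y.1) with hl | hl
    · exact Or.inl (key x y hl)
    · exact Or.inr (key y x hl)

/-- For `f(x) = a·x² + b·x + c` (`a ≥ 1`, `b, c ≥ 0`) and every `i` with
`1 ≤ i ≤ f(1) + 1`, the maximum degree of the underlying graph of the q-Jaco graph
`J_i(f)` equals `i − 1`, and the Jaconian set (the set of vertices of maximum degree)
is the whole vertex set `{v_1, …, v_i}`. -/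
theorem qJaco_small_maxDegree_and_jaconian_set (a b c : ℕ) (ha : 1 ≤ a) (i : ℕ)
    (h1 : 1 ≤ i) (h2 : i ≤ (a * 1 ^ 2 + b * 1 + c) + 1) :
    (jacoGraph (fun x => a * x ^ 2 + b * x + c) i).maxDegree = i - 1 ∧
    {v : Fin i | (jacoGraph (fun x => a * x ^ 2 + b * x + c) i).degree v =
        (jacoGraph (fun x => a * x ^ 2 + b * x + c) i).maxDegree} = Set.univ := by
  have htop : jacoGraph (fun x => a * x ^ 2 + b * x + c) i = ⊤ := by
    apply jacoGraph_eq_top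
    intro x hx
    refine h2.trans ?_
    have : 1 ^ 2 ≤ x ^ 2 := Nat.pow_le_pow_left hx 2
    show _ ≤ a * x ^ 2 + b * x + c + 1
    gcongr
  have hdeg : ∀ v, (jacoGraph (fun x => a * x ^ 2 + b * x + c) i).degree v = i - 1 := by
    intro v
    have := SimpleGraph.complete_graph_degree v
    rw [Fintype.card_fin] at this
    rw [← this]
    congr!
  have hmax : (jacoGraph (fun x => a * x ^ 2 + b * x + c) i).maxDegree = i - 1 := by
    apply le_antisymm
    · exact SimpleGraph.maxDegree_le_of_forall_degree_le _ _ (fun v => (hdeg v).le)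
    · rw [← hdeg ⟨0, h1⟩]
      exact SimpleGraph.degree_le_maxDegree _ _
  refine ⟨hmax, ?_⟩
  ext v
  simp only [Set.mem_setOf_eq, Set.mem_univ, iff_true]
  rw [hdeg, hmax]
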